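/- Let k be a positive integer and let μ ∈ D_alg(k). The following statements are equivalent: (1) there exists γ > 0 such that |μ(X_{i₁}⋯X_{i_n})| ≤ γⁿ for every n ≥ 1 and all i₁,…,i_n ∈ {1,…,k}; (2) there exists γ > 0 such that |Cf_{(i₁,…,i_n)}(R_μ)| ≤ γⁿ for every n ≥ 1 and all i₁,…,i_n; (3) there exists γ > 0 such that |Cf_{(i₁,…,i_n)}(η_μ)| ≤ γⁿ for every n ≥ 1 and all i₁,…,i_n. -/

import Mathlib

open Finset

attribute [local instance] Classical.propDecidable

open scoped ComplexOrder

namespace BBP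

/-- Partitions of `{1,…,m}` modeled as `Finpartition`s of `univ : Finset (Fin m)`. -/
abbrev FP (m : ℕ) := Finpartition (Finset.univ : Finset (Fin m))

noncomputable instance (m : ℕ) : Fintype (FP m) :=
  Fintype.ofInjective (fun π : FP m => π.parts) fun a b h => by
    cases a; cases b; simpa using h

/-- `x` is the minimum of the set `C`. -/
def IsMinOf {m : ℕ} (x : Fin m) (C : Finset (Fin m)) : Prop :=
  x ∈ C ∧ ∀ y ∈ C, x ≤ y

/-- `x` is the maximum of the set `C`. -/
def IsMaxOf {m : ℕ} (x : Fin m) (C : Finset (Fin m)) : Prop :=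
  x ∈ C ∧ ∀ y ∈ C, y ≤ x

/-- `a` and `b` lie in one block of `π`. -/
def SameBlock {m : ℕ} (π : FP m) (a b : Fin m) : Prop :=
  ∃ B ∈ π.parts, a ∈ B ∧ b ∈ B

/-- `π` is non-crossing: if `i<j<k<l`, `i,k` in one block and `j,l` in one block,
then all of them are in one block. -/
def IsNC {m : ℕ} (π : FP m) : Prop :=
  ∀ i j k l : Fin m, i < j → j < k → k < l →
    SameBlock π i k → SameBlock π j l → SameBlock π i j

/-- `A` embraces `B` : `min A ≤ min B` and `max B ≤ max A`. -/
def Embraces {m : ℕ} (A B : Finset (Fin m)) : Prop :=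
  ∃ a₁ a₂ b₁ b₂ : Fin m, IsMinOf a₁ A ∧ IsMaxOf a₂ A ∧ IsMinOf b₁ B ∧ IsMaxOf b₂ B ∧
    a₁ ≤ b₁ ∧ b₂ ≤ a₂

/-- `B` strictly embraces `A` : `min B < min A` and `max A < max B`. -/
def StrictlyEmbraces {m : ℕ} (B A : Finset (Fin m)) : Prop :=
  ∃ b₁ b₂ a₁ a₂ : Fin m, IsMinOf b₁ B ∧ IsMaxOf b₂ B ∧ IsMinOf a₁ A ∧ IsMaxOf a₂ A ∧
    b₁ < a₁ ∧ a₂ < b₂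

/-- `A` is an outer block of `π`. -/
def IsOuter {m : ℕ} (π : FP m) (A : Finset (Fin m)) : Prop :=
  A ∈ π.parts ∧ ¬ ∃ B ∈ π.parts, StrictlyEmbraces B A

/-- The number `|π|_out` of outer blocks of `π`. -/
noncomputable def numOuter {m : ℕ} (π : FP m) : ℕ :=
  (π.parts.filter fun A => IsOuter π A).card

/-- Reversed refinement order: every block of `ρ` is a union of blocks of `π`. -/
def Refines {m : ℕ} (π ρ : FP m) : Prop :=
  ∀ B ∈ π.parts, ∃ C ∈ ρ.parts, B ⊆ C

/-- The partial order `π ≪ ρ`. -/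
def Ll {m : ℕ} (π ρ : FP m) : Prop :=
  Refines π ρ ∧
    ∀ C ∈ ρ.parts, ∃ B ∈ π.parts, ∃ x y : Fin m,
      IsMinOf x C ∧ IsMaxOf y C ∧ x ∈ B ∧ y ∈ B

/-- The partition `1ₙ` of `{1,…,n+1}` with a single block. -/
noncomputable def fullPart (n : ℕ) : FP (n+1) :=
  Finpartition.indiscrete (by simpa using (Finset.univ_nonempty (α := Fin (n+1))).ne_empty)

/-- `π` is an interval partition. -/
def IsIntervalPartition {m : ℕ} (π : FP m) : Prop :=
  ∀ B ∈ π.parts, ∀ x ∈ B, ∀ z ∈ B, ∀ y : Fin m, x ≤ y → y ≤ z → y ∈ B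

/-- `σ` is the permutation associated to `π` : on each block `{b₁ < ⋯ < b_q}` it is the
cycle `b₁ ↦ b₂ ↦ ⋯ ↦ b_q ↦ b₁`. -/
def IsAssocPerm {m : ℕ} (π : FP m) (σ : Equiv.Perm (Fin m)) : Prop :=
  ∀ B ∈ π.parts, ∀ b ∈ B, σ b ∈ B ∧
    ((b < σ b ∧ ∀ x ∈ B, b < x → σ b ≤ x) ∨ (IsMaxOf b B ∧ IsMinOf (σ b) B))

/-- `κ` is the Kreweras complement of `π`, characterized by `P_κ = P_π⁻¹ ∘ P_{1ₙ}`,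
where `P_{1ₙ}` is the cycle `1 ↦ 2 ↦ ⋯ ↦ n ↦ 1` (i.e. `finRotate`). -/
def IsKrewerasPair {m : ℕ} (π κ : FP m) : Prop :=
  ∃ σπ σκ : Equiv.Perm (Fin m), IsAssocPerm π σπ ∧ IsAssocPerm κ σκ ∧
    σκ = σπ⁻¹ * finRotate m

/-- the element `2a-1` of `{1,…,2n}`, in `Fin (2n)` (0-indexed). -/
def oddEmb {n : ℕ} (a : Fin n) : Fin (2*n) := ⟨2*a.val, by have := a.isLt; omega⟩

/-- the element `2a` of `{1,…,2n}`, in `Fin (2n)` (0-indexed). -/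
def evenEmb {n : ℕ} (a : Fin n) : Fin (2*n) := ⟨2*a.val + 1, by have := a.isLt; omega⟩

/-- `θ = π^(odd) ∪ ρ^(even)` : the blocks of `θ` are the sets `{2a-1 : a ∈ A}` for `A`
a block of `π` and the sets `{2b : b ∈ B}` for `B` a block of `ρ`. -/
def IsOddEvenJoin {n : ℕ} (π ρ : FP n) (θ : FP (2*n)) : Prop :=
  θ.parts = π.parts.image (fun B => B.image oddEmb) ∪
    ρ.parts.image (fun B => B.image evenEmb)

/-- a block consisting of odd elements of `{1,…,2n}` (even 0-indexed values). -/
def OddBlock {m : ℕ} (B : Finset (Fin m)) : Prop := ∀ x ∈ B, x.val % 2 = 0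

/-- a block consisting of even elements of `{1,…,2n}` (odd 0-indexed values). -/
def EvenBlock {m : ℕ} (B : Finset (Fin m)) : Prop := ∀ x ∈ B, x.val % 2 = 1

/-- every block of `θ` is contained in the odds or in the evens. -/
def ParityPreserving {m : ℕ} (θ : FP m) : Prop :=
  ∀ B ∈ θ.parts, OddBlock B ∨ EvenBlock B

def OppositeParity {m : ℕ} (A B : Finset (Fin m)) : Prop :=
  (OddBlock A ∧ EvenBlock B) ∨ (EvenBlock A ∧ OddBlock B)

def SameParity {m : ℕ} (A B : Finset (Fin m)) : Prop :=
  (OddBlock A ∧ OddBlock B) ∨ (EvenBlock A ∧ EvenBlock B)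

/-- `P = Parent_θ(A)` : the unique block `P ≠ A` of `θ` embracing `A` such that every
block `A' ≠ A` of `θ` embracing `A` also embraces `P`. -/
def IsParent {m : ℕ} (θ : FP m) (A P : Finset (Fin m)) : Prop :=
  P ∈ θ.parts ∧ P ≠ A ∧ Embraces P A ∧
    ∀ A' ∈ θ.parts, A' ≠ A → Embraces A' A → Embraces A' P

/-- `θ` has exactly two outer blocks. -/
def ExactlyTwoOuterBlocks {m : ℕ} (θ : FP m) : Prop :=
  ∃ M ∈ θ.parts, ∃ N ∈ θ.parts, M ≠ N ∧ IsOuter θ M ∧ IsOuter θ N ∧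
    ∀ A ∈ θ.parts, IsOuter θ A → A = M ∨ A = N

/-- A series in `ℂ₀⟨⟨z₁,…,z_k⟩⟩`, given by its family of coefficients: `f n w` is the
coefficient of `z_{w 0} z_{w 1} ⋯ z_{w n}` (a word of length `n+1 ≥ 1`). -/
abbrev NCSeries (k : ℕ) := (n : ℕ) → (Fin (n+1) → Fin k) → ℂ

/-- The coefficient `Cf_{w|B}(f)` of the restriction of the word `w` to the set `B`,
listing the elements of `B` in increasing order.  (Equals `1` for `B = ∅`.) -/
noncomputable def partCoeff {k m : ℕ} (f : NCSeries k) (w : Fin (m+1) → Fin k)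
    (B : Finset (Fin (m+1))) : ℂ :=
  if h : B.Nonempty then
    f (B.card - 1) (fun j =>
      w ((B.orderIsoOfFin (Nat.succ_pred_eq_of_pos (Finset.card_pos.mpr h)).symm j).1))
  else 1

/-- The generalized coefficient `Cf_{w;π}(f) = ∏_{B block of π} Cf_{w|B}(f)`. -/
noncomputable def genCoeff {k m : ℕ} (f : NCSeries k) (w : Fin (m+1) → Fin k)
    (π : FP (m+1)) : ℂ :=
  ∏ B ∈ π.parts, partCoeff f w B

/-- Linear functionals on `ℂ⟨X₁,…,X_k⟩`. -/
abbrev Dist (k : ℕ) := FreeAlgebra ℂ (Fin k) →ₗ[ℂ] ℂ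

/-- `μ ∈ D_alg(k)` : `μ` is normalized by `μ(1) = 1`. -/
def IsDalg {k : ℕ} (μ : Dist k) : Prop := μ 1 = 1

/-- The moment series `M_μ`, with `(momentSeries μ) n w = μ (X_{w 0} ⋯ X_{w n})`. -/
noncomputable def momentSeries {k : ℕ} (μ : Dist k) : NCSeries k :=
  fun _ w => μ ((List.ofFn fun j => FreeAlgebra.ι ℂ (w j)).prod)

/-- `f = R_μ` : the moments of `μ` are obtained from `f` by summation over all
non-crossing partitions. -/
def IsRTransform {k : ℕ} (μ : Dist k) (f : NCSeries k) : Prop :=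
  ∀ (n : ℕ) (w : Fin (n+1) → Fin k),
    momentSeries μ n w = ∑ π : FP (n+1), if IsNC π then genCoeff f w π else 0

/-- `g = η_μ` : the moments of `μ` are obtained from `g` by summation over all
interval partitions. -/
def IsEtaSeries {k : ℕ} (μ : Dist k) (g : NCSeries k) : Prop :=
  ∀ (n : ℕ) (w : Fin (n+1) → Fin k),
    momentSeries μ n w = ∑ π : FP (n+1), if IsIntervalPartition π then genCoeff g w π else 0

/-- `μ ∈ D_c(k)` : `μ` is the joint distribution of a `k`-tuple of selfadjoint elements
with respect to a state on a unital C*-algebra. -/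
def IsDc {k : ℕ} (μ : Dist k) : Prop :=
  IsDalg μ ∧
  ∃ (A : Type) (_ : NormedRing A) (_ : StarRing A) (_ : CStarRing A)
    (_ : NormedAlgebra ℂ A) (_ : StarModule ℂ A) (_ : CompleteSpace A)
    (φ : A →ₗ[ℂ] ℂ) (x : Fin k → A),
      φ 1 = 1 ∧ (∀ a : A, 0 ≤ φ (star a * a)) ∧ (∀ i, IsSelfAdjoint (x i)) ∧
      ∀ (n : ℕ) (w : Fin (n+1) → Fin k),
        momentSeries μ n w = φ ((List.ofFn fun j => x (w j)).prod)

/-- convergence in moments. -/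
def ConvInMoments {k : ℕ} (μseq : ℕ → Dist k) (μ : Dist k) : Prop :=
  ∀ P : FreeAlgebra ℂ (Fin k),
    Filter.Tendsto (fun N => μseq N P) Filter.atTop (nhds (μ P))

/-- coefficientwise convergence of series. -/
def ConvCoeffwise {k : ℕ} (fseq : ℕ → NCSeries k) (f : NCSeries k) : Prop :=
  ∀ (n : ℕ) (w : Fin (n+1) → Fin k),
    Filter.Tendsto (fun N => fseq N n w) Filter.atTop (nhds (f n w))

/-- `ν` is the `p`-fold free additive convolution `μ ⊞ ⋯ ⊞ μ`, i.e. `R_ν = p · R_μ`. -/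
def IsNFoldFree {k : ℕ} (p : ℕ) (μ ν : Dist k) : Prop :=
  ∃ f : NCSeries k, IsRTransform μ f ∧ IsRTransform ν (fun n w => (p : ℂ) * f n w)

/-- `ν` is the `p`-fold Boolean convolution `μ ⊎ ⋯ ⊎ μ`, i.e. `η_ν = p · η_μ`. -/
def IsNFoldBool {k : ℕ} (p : ℕ) (μ ν : Dist k) : Prop :=
  ∃ g : NCSeries k, IsEtaSeries μ g ∧ IsEtaSeries ν (fun n w => (p : ℂ) * g n w)

/-- `ν = 𝔹(μ)` : the Boolean Bercovici–Pata bijection, `R_{𝔹(μ)} = η_μ`. -/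
def IsBP {k : ℕ} (μ ν : Dist k) : Prop :=
  ∃ f : NCSeries k, IsEtaSeries μ f ∧ IsRTransform ν f

/-- `μ ∈ D_c(k)` is infinitely divisible with respect to `⊞`. -/
def IsInfDiv {k : ℕ} (μ : Dist k) : Prop :=
  IsDc μ ∧ ∀ N : ℕ, 0 < N → ∃ ν : Dist k, IsDc ν ∧ IsNFoldFree N ν μ

/-- `g = Reta(f)`, i.e. there is `μ ∈ D_alg(k)` with `f = R_μ` and `g = η_μ`. -/
def RetaRel {k : ℕ} (f g : NCSeries k) : Prop :=
  ∃ μ : Dist k, IsDalg μ ∧ IsRTransform μ f ∧ IsEtaSeries μ g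

/-!
A noncrossing partition is determined by the minima and the maxima of its blocks, so there are at
most `4 ^ n` noncrossing, hence also at most `4 ^ n` interval partitions of `n` points. A geometric
bound on `R_μ` or `η_μ` therefore gives one on the moments.

Conversely, both moment formulas are inverted by recursions in which a set is cut between two
consecutive points. Expanding the sum over interval partitions of `S` according to the last block
expresses `η_μ` on `S` through the moments on `S` and products of values of `η_μ` on upper parts of
`S` with moments on lower parts. In the noncrossing case let `N(U, V)`, for `U` to the left of `V`,
be the sum over those noncrossing partitions of `U ∪ V` whose blocks inside `U` all contain
`s = min U`. Then `N({s}, V)` is a moment and `N(U, ∅)` is the value of `R_μ` on `U`, and moving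
`t = max U` from `U` to `V` gives

  `N(U \ {t}, V ∪ {t}) = N(U, V) + ∑_{s < b ∈ U} N({x ∈ U | b ≤ x}, ∅) * N({x ∈ U | x < b}, V)`.

Both recursions have the shape of the recursion for the Catalan numbers, whose geometric growth
bounds the solutions.
-/

section PartitionSum

variable {α R : Type*} [CommSemiring R] {φ : Finset α → R} {S : Finset α}
  {P Q : Finset (Finset α) → Prop}

/-- The sum of `∏ B ∈ π, φ B` over the partitions `π` of `S` that satisfy `Q`. The predicate acts
on the family of blocks and not on `Finpartition S`, so that it makes sense for all sets `S`. -/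
noncomputable def partitionSum (φ : Finset α → R) (S : Finset α)
    (Q : Finset (Finset α) → Prop) : R :=
  ∑ π : Finpartition S with Q π.parts, ∏ B ∈ π.parts, φ B

lemma partitionSum_congr (h : ∀ π : Finpartition S, P π.parts ↔ Q π.parts) :
    partitionSum φ S P = partitionSum φ S Q := by
  simp only [partitionSum, h]

lemma partitionSum_and_add_and_not :
    partitionSum φ S (fun π => P π ∧ Q π) + partitionSum φ S (fun π => P π ∧ ¬ Q π) =
      partitionSum φ S P := by
  simp only [partitionSum, ← filter_filter]
  exact sum_filter_add_sum_filter_not _ _ _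

lemma partitionSum_empty (hQ : Q ∅) : partitionSum φ ∅ Q = 1 := by
  have hparts (π : Finpartition (∅ : Finset α)) : π.parts = ∅ := π.parts_eq_empty_iff.2 rfl
  have : Unique (Finpartition (∅ : Finset α)) := inferInstanceAs (Unique (Finpartition ⊥))
  simp [partitionSum, hparts, hQ]

/-- The partition of `S` consisting of the block `B` and the blocks of a partition of `S \ B`. -/
noncomputable def insertBlock {B : Finset α} (hB : B.Nonempty) (hBS : B ⊆ S)
    (π : Finpartition (S \ B)) : Finpartition S :=
  π.extend hB.ne_empty disjoint_sdiff_self_left (sdiff_sup_cancel hBS)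

lemma insertBlock_parts {B : Finset α} (hB : B.Nonempty) (hBS : B ⊆ S)
    (π : Finpartition (S \ B)) : (insertBlock hB hBS π).parts = insert B π.parts :=
  rfl

lemma notMem_parts_sdiff {B : Finset α} (hB : B.Nonempty) (π : Finpartition (S \ B)) :
    B ∉ π.parts := fun h =>
  hB.ne_empty <| disjoint_self.1 <| disjoint_sdiff_self_left.mono_left (π.subset h)

lemma insertBlock_injective {B : Finset α} (hB : B.Nonempty) (hBS : B ⊆ S) :
    Function.Injective (insertBlock hB hBS) := fun π ρ h => by
  have hparts := congrArg (fun τ => τ.parts.erase B) h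
  simp only [insertBlock_parts, erase_insert (notMem_parts_sdiff hB _)] at hparts
  exact Finpartition.ext hparts

lemma exists_insertBlock_eq {B : Finset α} (hne : B.Nonempty) (hBS : B ⊆ S)
    {π : Finpartition S} (hB : B ∈ π.parts) :
    ∃ ρ : Finpartition (S \ B), insertBlock hne hBS ρ = π := by
  have hdisj {C : Finset α} (hC : C ∈ π.parts) (hne : C ≠ B) : C \ B = C :=
    sdiff_eq_left.2 (π.disjoint hC hB hne)
  refine ⟨π.avoid B, Finpartition.ext (ext fun C => ?_)⟩
  rw [insertBlock_parts, mem_insert, Finpartition.mem_avoid]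
  constructor
  · rintro (rfl | ⟨D, hD, hDB, rfl⟩)
    · exact hB
    · rwa [hdisj hD (by rintro rfl; exact hDB le_rfl)]
  · intro hC
    refine or_iff_not_imp_left.2 fun hne => ⟨C, hC, fun hCB => ?_, hdisj hC hne⟩
    exact π.ne_bot hC ((π.disjoint hC hB hne).eq_bot_of_le hCB)

theorem partitionSum_eq_sum_block {ι : Type*} {T : Finset ι} {blk : ι → Finset α}
    (hne : ∀ b ∈ T, (blk b).Nonempty) (hS : ∀ b ∈ T, blk b ⊆ S)
    (hQ : ∀ π : Finpartition S, Q π.parts → ∃! b, b ∈ T ∧ blk b ∈ π.parts) :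
    partitionSum φ S Q =
      ∑ b ∈ T, φ (blk b) * partitionSum φ (S \ blk b) (fun P => Q (insert (blk b) P)) := by
  have hterm (b : ι) (hb : b ∈ T) :
      φ (blk b) * partitionSum φ (S \ blk b) (fun P => Q (insert (blk b) P)) =
        ∑ π : Finpartition S with Q π.parts, if blk b ∈ π.parts then ∏ B ∈ π.parts, φ B else 0 := by
    rw [partitionSum, mul_sum, ← sum_filter, filter_filter]
    refine sum_nbij (insertBlock (hne b hb) (hS b hb)) ?_
      (insertBlock_injective _ _).injOn ?_ ?_
    · intro π hπ
      simpa [insertBlock_parts] using hπ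
    · intro π hπ
      obtain ⟨hπQ, hπb⟩ := (mem_filter.1 hπ).2
      obtain ⟨ρ, rfl⟩ := exists_insertBlock_eq (hne b hb) (hS b hb) hπb
      exact ⟨ρ, by simpa [insertBlock_parts] using hπQ, rfl⟩
    · intro π _
      rw [insertBlock_parts, prod_insert (notMem_parts_sdiff (hne b hb) π)]
  rw [sum_congr rfl hterm, sum_comm, partitionSum]
  refine sum_congr rfl fun π hπ => ?_
  obtain ⟨b, ⟨hbT, hb⟩, huniq⟩ := hQ π (mem_filter.1 hπ).2
  rw [sum_eq_single_of_mem b hbT fun c hc hcb => if_neg fun h => hcb (huniq c ⟨hc, h⟩),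
    if_pos hb]

lemma partitionSum_eq_of_forall_mem (hS : S.Nonempty) (hQS : Q {S})
    (hQ : ∀ π : Finpartition S, Q π.parts → S ∈ π.parts) : partitionSum φ S Q = φ S := by
  rw [partitionSum_eq_sum_block (T := {S}) (blk := id) (by simpa) (by simp)
    fun π hπ => ⟨S, by simpa using hQ π hπ, by simp⟩]
  simp [partitionSum_empty, hQS]

end PartitionSum

section Noncrossing

variable {α : Type*} [LinearOrder α] {S : Finset α} {π ρ : Finpartition S}

/-- A family of blocks is noncrossing if `i < j < k < l` with `i, k ∈ B` and `j, l ∈ C` forces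
`B = C`. -/
def IsNoncrossing (P : Finset (Finset α)) : Prop :=
  ∀ B ∈ P, ∀ C ∈ P, ∀ i ∈ B, ∀ j ∈ C, ∀ k ∈ B, ∀ l ∈ C, i < j → j < k → k < l → B = C

/-- A family of blocks is an interval family if no block meets the convex hull of another one. For
partitions of `S` this says that the blocks are convex relative to `S`. -/
def IsIntervalFamily (P : Finset (Finset α)) : Prop :=
  ∀ B ∈ P, ∀ C ∈ P, ∀ x ∈ B, ∀ y ∈ C, ∀ z ∈ B, x ≤ y → y ≤ z → B = C

lemma IsIntervalFamily.isNoncrossing {P : Finset (Finset α)} (h : IsIntervalFamily P) :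
    IsNoncrossing P := fun B hB C hC i hi j hj k hk _ _ hij hjk _ =>
  h B hB C hC i hi j hj k hk hij.le hjk.le

/-- The set of minima of the blocks of `π`. Together with the set of maxima it determines a
noncrossing partition. -/
noncomputable def blockMinima (π : Finpartition S) : Finset α :=
  {x ∈ S | ∀ y ∈ S, π.part y = π.part x → x ≤ y}

/-- The set of maxima of the blocks of `π`. -/
noncomputable def blockMaxima (π : Finpartition S) : Finset α :=
  {x ∈ S | ∀ y ∈ S, π.part y = π.part x → y ≤ x}

lemma exists_mem_blockMaxima_part_eq (π : Finpartition S) {x : α} (hx : x ∈ S) :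
    ∃ c ∈ blockMaxima π, π.part c = π.part x := by
  obtain ⟨c, hc, hmax⟩ := exists_max_image {y ∈ S | π.part y = π.part x} id ⟨x, by simp [hx]⟩
  simp only [mem_filter, id] at hc hmax
  exact ⟨c, mem_filter.2 ⟨hc.1, fun y hy hyc => hmax y ⟨hy, hyc.trans hc.2⟩⟩, hc.2⟩

lemma exists_pred_of_notMem_blockMinima {x : α} (hx : x ∈ S) (hmin : x ∉ blockMinima π) :
    ∃ y ∈ S, y < x ∧ π.part y = π.part x ∧ ∀ z ∈ S, y < z → z < x → π.part z ≠ π.part x := by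
  obtain ⟨u, hu, hux, hlt⟩ : ∃ u ∈ S, π.part u = π.part x ∧ u < x := by
    simpa [blockMinima, hx] using hmin
  obtain ⟨y, hy, hmax⟩ := exists_max_image {y ∈ S | π.part y = π.part x ∧ y < x} id
    ⟨u, by simp [hu, hux, hlt]⟩
  simp only [mem_filter, id] at hy hmax
  exact ⟨y, hy.1, hy.2.2, hy.2.1, fun z hz hyz hzx h => (hmax z ⟨hz, h, hzx⟩).not_gt hyz⟩

lemma IsNoncrossing.part_eq_part (hπ : IsNoncrossing π.parts) {i j k l : α} (hi : i ∈ S)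
    (hj : j ∈ S) (hk : k ∈ S) (hl : l ∈ S) (hij : i < j) (hjk : j < k) (hkl : k < l)
    (hik : π.part i = π.part k) (hjl : π.part j = π.part l) : π.part i = π.part j :=
  hπ _ (π.part_mem.2 hi) _ (π.part_mem.2 hj) i (π.mem_part_self.2 hi) j (π.mem_part_self.2 hj)
    k (hik ▸ π.mem_part_self.2 hk) l (hjl ▸ π.mem_part_self.2 hl) hij hjk hkl

/-- The maximum of the `π`-block of `z` lies below `x`, since that block cannot cross the one
containing `y` and `x`. Being also a maximum of its `ρ`-block, it separates `z` from `x` in `ρ`. -/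
lemma IsNoncrossing.part_ne_of_lt_of_lt (hπ : IsNoncrossing π.parts)
    (hmax : blockMaxima π ⊆ blockMaxima ρ) {x y z : α} (hx : x ∈ S) (hy : y ∈ S) (hz : z ∈ S)
    (hbelow : ∀ u ∈ S, ∀ v ∈ S, u < x → v < x → π.part u = π.part v → ρ.part u = ρ.part v)
    (hyx : π.part y = π.part x) (hgap : ∀ u ∈ S, y < u → u < x → π.part u ≠ π.part x)
    (hyz : y < z) (hzx : z < x) : ρ.part z ≠ ρ.part x := by
  intro hρ
  obtain ⟨c, hc, hcz⟩ := exists_mem_blockMaxima_part_eq π hz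
  have hcS : c ∈ S := (mem_filter.1 hc).1
  have hcx : c < x := by
    rcases lt_trichotomy c x with h | rfl | h
    · exact h
    · exact absurd hcz.symm (hgap z hz hyz hzx)
    · have := hπ.part_eq_part hy hz hx hcS hyz hzx h hyx hcz.symm
      exact absurd (this.symm.trans hyx) (hgap z hz hyz hzx)
  have hρc : ρ.part x = ρ.part c := (hbelow c hcS z hz hcx hzx hcz ▸ hρ).symm
  exact hcx.not_ge ((mem_filter.1 (hmax hc)).2 x hx hρc)

lemma IsNoncrossing.part_eq_part_iff_of_lt (hπ : IsNoncrossing π.parts)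
    (hρ : IsNoncrossing ρ.parts) (hmin : blockMinima π = blockMinima ρ)
    (hmax : blockMaxima π = blockMaxima ρ) {x z : α} (hx : x ∈ S) (hz : z ∈ S) (hzx : z < x)
    (hbelow : ∀ u ∈ S, ∀ v ∈ S, u < x → v < x → (π.part u = π.part v ↔ ρ.part u = ρ.part v)) :
    π.part z = π.part x ↔ ρ.part z = ρ.part x := by
  by_cases hxmin : x ∈ blockMinima π
  · have hxmin' := hmin ▸ hxmin
    exact iff_of_false (fun h => ((mem_filter.1 hxmin).2 z hz h).not_gt hzx)
      (fun h => ((mem_filter.1 hxmin').2 z hz h).not_gt hzx)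
  obtain ⟨y, hy, hylt, hyx, hgap⟩ := exists_pred_of_notMem_blockMinima hx hxmin
  obtain ⟨y', hy', hylt', hyx', hgap'⟩ := exists_pred_of_notMem_blockMinima hx (hmin ▸ hxmin)
  obtain rfl : y = y' := by
    rcases lt_trichotomy y y' with h | h | h
    · exact absurd hyx' (hπ.part_ne_of_lt_of_lt hmax.subset hx hy hy'
        (fun u hu v hv hux hvx => (hbelow u hu v hv hux hvx).1) hyx hgap h hylt')
    · exact h
    · exact absurd hyx (hρ.part_ne_of_lt_of_lt hmax.superset hx hy' hy
        (fun u hu v hv hux hvx => (hbelow u hu v hv hux hvx).2) hyx' hgap' h hylt)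
  rw [← hyx, ← hyx']
  exact hbelow z hz y hy hzx hylt

lemma eq_of_forall_part_eq_part_iff
    (h : ∀ x ∈ S, ∀ y ∈ S, (π.part x = π.part y ↔ ρ.part x = ρ.part y)) : π = ρ := by
  have hpart : ∀ x ∈ S, π.part x = ρ.part x := by
    intro x hx
    ext z
    by_cases hz : z ∈ S
    · rw [π.mem_part_iff_part_eq_part hz hx, ρ.mem_part_iff_part_eq_part hz hx, h z hz x hx]
    · exact iff_of_false (fun h => hz (π.part_subset x h)) (fun h => hz (ρ.part_subset x h))
  have hparts (τ : Finpartition S) : τ.parts = S.image τ.part :=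
    coe_injective <| by
      rw [coe_image]
      exact τ.part_surjOn.antisymm (Set.image_subset_iff.2 fun x hx => τ.part_mem.2 hx)
  exact Finpartition.ext (by rw [hparts, hparts, image_congr hpart])

/-- Scanning from left to right, `π` is recovered as follows: a minimum opens a new block, and any
other point joins the innermost block that is still open. -/
theorem IsNoncrossing.eq_of_blockMinima_eq_of_blockMaxima_eq (hπ : IsNoncrossing π.parts)
    (hρ : IsNoncrossing ρ.parts) (hmin : blockMinima π = blockMinima ρ)
    (hmax : blockMaxima π = blockMaxima ρ) : π = ρ := by
  have hiff (f g : α → Finset α) (x y : α)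
      (hlt : x < y → (f x = f y ↔ g x = g y)) (hgt : y < x → (f y = f x ↔ g y = g x)) :
      f x = f y ↔ g x = g y := by
    rcases lt_trichotomy x y with h | rfl | h
    · exact hlt h
    · simp
    · simpa only [eq_comm] using hgt h
  have hlt : ∀ x ∈ S, ∀ z ∈ S, z < x → (π.part z = π.part x ↔ ρ.part z = ρ.part x) := by
    intro x hx
    refine Set.WellFoundedOn.induction
      (P := fun x => ∀ z ∈ S, z < x → (π.part z = π.part x ↔ ρ.part z = ρ.part x))
      S.finite_toSet.isWF hx fun x hx ih z hz hzx => ?_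
    exact hπ.part_eq_part_iff_of_lt hρ hmin hmax hx hz hzx fun u hu v hv hux hvx =>
      hiff _ _ u v (ih v hv hvx u hu) (ih u hu hux v hv)
  exact eq_of_forall_part_eq_part_iff fun x hx y hy => hiff _ _ x y (hlt y hy x hx) (hlt x hx y hy)

theorem card_filter_isNoncrossing_le (S : Finset α) :
    #{π : Finpartition S | IsNoncrossing π.parts} ≤ 4 ^ #S := by
  calc #{π : Finpartition S | IsNoncrossing π.parts} ≤ #(S.powerset ×ˢ S.powerset) := by
        refine card_le_card_of_injOn (fun π => (blockMinima π, blockMaxima π)) ?_ ?_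
        · exact fun π _ => mem_product.2
            ⟨mem_powerset.2 (filter_subset _ _), mem_powerset.2 (filter_subset _ _)⟩
        · intro π hπ ρ hρ h
          obtain ⟨hmin, hmax⟩ := Prod.ext_iff.1 h
          exact (mem_filter.1 hπ).2.eq_of_blockMinima_eq_of_blockMaxima_eq (mem_filter.1 hρ).2
            hmin hmax
    _ = 4 ^ #S := by rw [card_product, card_powerset, ← mul_pow]; norm_num

theorem norm_partitionSum_le {R : Type*} [NormedCommRing R] [NormOneClass R] {φ : Finset α → R}
    {Q : Finset (Finset α) → Prop} {γ : ℝ} (hγ : 0 ≤ γ)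
    (hQ : ∀ π : Finpartition S, Q π.parts → IsNoncrossing π.parts)
    (hφ : ∀ B ⊆ S, B.Nonempty → ‖φ B‖ ≤ γ ^ #B) : ‖partitionSum φ S Q‖ ≤ (4 * γ) ^ #S := by
  have hterm (π : Finpartition S) : ‖∏ B ∈ π.parts, φ B‖ ≤ γ ^ #S := calc
    ‖∏ B ∈ π.parts, φ B‖ ≤ ∏ B ∈ π.parts, ‖φ B‖ := Finset.norm_prod_le _ _
    _ ≤ ∏ B ∈ π.parts, γ ^ #B := prod_le_prod (fun _ _ => norm_nonneg _) fun B hB =>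
        hφ B (π.subset hB) (π.nonempty_of_mem_parts hB)
    _ = γ ^ #S := by rw [prod_pow_eq_pow_sum, π.sum_card_parts]
  have hcard : #{π : Finpartition S | Q π.parts} ≤ 4 ^ #S :=
    (card_le_card (monotone_filter_right _ fun π _ => hQ π)).trans
      (card_filter_isNoncrossing_le S)
  calc ‖partitionSum φ S Q‖ ≤ ∑ π : Finpartition S with Q π.parts, ‖∏ B ∈ π.parts, φ B‖ :=
        norm_sum_le _ _
    _ ≤ ∑ π : Finpartition S with Q π.parts, γ ^ #S := sum_le_sum fun π _ => hterm π
    _ = #{π : Finpartition S | Q π.parts} * γ ^ #S := by rw [sum_const, nsmul_eq_mul]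
    _ ≤ 4 ^ #S * γ ^ #S := by gcongr; exact_mod_cast hcard
    _ = (4 * γ) ^ #S := (mul_pow _ _ _).symm

end Noncrossing

section Majorant

variable {α : Type*} [LinearOrder α] {γ : ℝ}

/-- The weight `a_p = (2γ)^p C_{p-1} / 2`, with `C` the Catalan numbers, that dominates the values
of the inverted partition sums on sets of size `p ≥ 1`. It is chosen so that
`γ a_{p-1} + ∑_{i+j=p} a_i a_j ≤ a_p`. -/
noncomputable def catalanMajorant (γ : ℝ) (p : ℕ) : ℝ :=
  (2 * γ) ^ p * catalan (p - 1) / 2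

lemma catalanMajorant_nonneg (hγ : 0 ≤ γ) (p : ℕ) : 0 ≤ catalanMajorant γ p := by
  unfold catalanMajorant
  positivity

lemma catalan_le_catalan_succ (n : ℕ) : catalan n ≤ catalan (n + 1) := by
  rw [catalan_succ']
  simpa using single_le_sum (f := fun ij : ℕ × ℕ => catalan ij.1 * catalan ij.2)
    (fun _ _ => Nat.zero_le _) (show (n, 0) ∈ antidiagonal n by simp)

lemma catalan_pos (n : ℕ) : 0 < catalan n :=
  n.rec (by simp) fun n ih => ih.trans_le (catalan_le_catalan_succ n)

lemma catalan_le_four_pow (n : ℕ) : catalan n ≤ 4 ^ n := by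
  rw [catalan_eq_centralBinom_div]
  exact (Nat.div_le_self _ _).trans (Nat.centralBinom_le_four_pow n)

lemma pow_le_catalanMajorant (hγ : 0 ≤ γ) {p : ℕ} (hp : p ≠ 0) : γ ^ p ≤ catalanMajorant γ p := by
  obtain ⟨n, rfl⟩ := Nat.exists_eq_succ_of_ne_zero hp
  have hcat : (1 : ℝ) ≤ catalan n := by exact_mod_cast catalan_pos n
  have htwo : (1 : ℝ) ≤ 2 ^ n := one_le_pow₀ one_le_two
  calc γ ^ (n + 1) = 1 * γ ^ (n + 1) * 1 := by ring
    _ ≤ 2 ^ n * γ ^ (n + 1) * catalan n := by gcongr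
    _ = catalanMajorant γ (n + 1) := by rw [catalanMajorant, Nat.add_sub_cancel]; ring

lemma pow_le_mul_catalanMajorant_pred (hγ : 0 ≤ γ) {p : ℕ} (hp : 1 < p) :
    γ ^ p ≤ γ * catalanMajorant γ (p - 1) := by
  rw [← mul_pow_sub_one (Nat.ne_zero_of_lt hp) γ]
  gcongr
  exact pow_le_catalanMajorant hγ (Nat.sub_pos_of_lt hp).ne'

lemma catalanMajorant_le_pow (hγ : 0 ≤ γ) (p : ℕ) : catalanMajorant γ p ≤ (8 * γ) ^ p := by
  have hcat : (catalan (p - 1) : ℝ) ≤ 4 ^ p := by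
    exact_mod_cast (catalan_le_four_pow _).trans (Nat.pow_le_pow_right four_pos (Nat.sub_le p 1))
  calc catalanMajorant γ p ≤ (2 * γ) ^ p * 4 ^ p / 2 := by unfold catalanMajorant; gcongr
    _ ≤ (2 * γ) ^ p * 4 ^ p := half_le_self (by positivity)
    _ = (8 * γ) ^ p := by rw [← mul_pow]; ring

lemma mul_catalanMajorant_add_sum_antidiagonal_le (hγ : 0 ≤ γ) (n : ℕ) :
    γ * catalanMajorant γ (n + 1) +
        ∑ ij ∈ antidiagonal n, catalanMajorant γ (ij.1 + 1) * catalanMajorant γ (ij.2 + 1) ≤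
      catalanMajorant γ (n + 2) := by
  have hsum : ∑ ij ∈ antidiagonal n, catalanMajorant γ (ij.1 + 1) * catalanMajorant γ (ij.2 + 1) =
      (2 * γ) ^ (n + 2) / 4 * catalan (n + 1) := by
    rw [catalan_succ', Nat.cast_sum, mul_sum]
    refine sum_congr rfl fun ij hij => ?_
    rw [← mem_antidiagonal.1 hij]
    simp only [catalanMajorant, Nat.add_sub_cancel]
    push_cast
    ring
  have hcat : (catalan n : ℝ) ≤ catalan (n + 1) := by exact_mod_cast catalan_le_catalan_succ n
  calc γ * catalanMajorant γ (n + 1) + _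
      = (2 * γ) ^ (n + 2) / 4 * catalan n + (2 * γ) ^ (n + 2) / 4 * catalan (n + 1) := by
        rw [hsum, catalanMajorant, Nat.add_sub_cancel]; ring
    _ ≤ (2 * γ) ^ (n + 2) / 4 * catalan (n + 1) + (2 * γ) ^ (n + 2) / 4 * catalan (n + 1) := by
        gcongr
    _ = catalanMajorant γ (n + 2) := by rw [catalanMajorant, Nat.add_succ_sub_one]; ring

lemma strictMonoOn_card_filter_lt (S : Finset α) :
    StrictMonoOn (fun b => #{x ∈ S | x < b}) S := fun b hb _ _ hbc =>
  card_lt_card <| (ssubset_iff_of_subset (monotone_filter_right S fun _ _ hx => hx.trans hbc)).2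
    ⟨b, by simpa using ⟨hb, hbc⟩, by simp⟩

/-- Every `b` above the minimum `s` cuts `S` into a nonempty upper and a nonempty lower part. -/
lemma mul_catalanMajorant_add_sum_cut_le (hγ : 0 ≤ γ) {S : Finset α} {s : α} (hs : s ∈ S)
    (hS : S.Nontrivial) :
    γ * catalanMajorant γ (#S - 1) + ∑ b ∈ S with s < b,
        catalanMajorant γ #{x ∈ S | b ≤ x} * catalanMajorant γ #{x ∈ S | x < b} ≤
      catalanMajorant γ #S := by
  obtain ⟨n, hn⟩ : ∃ n, #S = n + 2 := Nat.exists_eq_add_of_le' (one_lt_card_iff_nontrivial.2 hS)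
  set cut : α → ℕ × ℕ := fun b => (#{x ∈ S | b ≤ x} - 1, #{x ∈ S | x < b} - 1)
  have hupper {b : α} (hb : b ∈ S) : 0 < #{x ∈ S | b ≤ x} := card_pos.2 ⟨b, by simp [hb]⟩
  have hlower {b : α} (hb : s < b) : 0 < #{x ∈ S | x < b} := card_pos.2 ⟨s, by simp [hs, hb]⟩
  have hcut : Set.InjOn cut ↑{b ∈ S | s < b} := by
    intro b hb c hc hbc
    obtain ⟨hbS, hsb⟩ := mem_filter.1 hb
    obtain ⟨hcS, hsc⟩ := mem_filter.1 hc
    refine (strictMonoOn_card_filter_lt S).injOn hbS hcS ?_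
    have := hlower hsb
    have := hlower hsc
    have := (Prod.ext_iff.1 hbc).2
    simp only [cut] at this ⊢
    omega
  have hmem : {b ∈ S | s < b}.image cut ⊆ antidiagonal n := by
    intro ij hij
    obtain ⟨b, hb, rfl⟩ := mem_image.1 hij
    obtain ⟨hbS, hsb⟩ := mem_filter.1 hb
    have hcard := card_filter_add_card_filter_not (s := S) (b ≤ ·)
    simp only [not_le] at hcard
    have := hupper hbS
    have := hlower hsb
    exact mem_antidiagonal.2 (by simp only [cut]; omega)
  calc _ = γ * catalanMajorant γ (n + 1) + ∑ ij ∈ {b ∈ S | s < b}.image cut,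
        catalanMajorant γ (ij.1 + 1) * catalanMajorant γ (ij.2 + 1) := by
        rw [sum_image hcut, hn]
        refine congrArg _ (sum_congr rfl fun b hb => ?_)
        obtain ⟨hbS, hsb⟩ := mem_filter.1 hb
        simp only [cut]
        rw [Nat.sub_add_cancel (hupper hbS), Nat.sub_add_cancel (hlower hsb)]
    _ ≤ γ * catalanMajorant γ (n + 1) + ∑ ij ∈ antidiagonal n,
        catalanMajorant γ (ij.1 + 1) * catalanMajorant γ (ij.2 + 1) := by
        gcongr
        exact fun _ _ _ => mul_nonneg (catalanMajorant_nonneg hγ _) (catalanMajorant_nonneg hγ _)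
    _ ≤ catalanMajorant γ #S := hn ▸ mul_catalanMajorant_add_sum_antidiagonal_le hγ n

end Majorant

section Inversion

variable {α R : Type*} [LinearOrder α] {φ : Finset α → R} {S U V B : Finset α}
  {P : Finset (Finset α)} {s t : α} {γ : ℝ}

lemma isNoncrossing_insert_iff
    (hB : ∀ C ∈ P, ∀ y ∈ C, ∀ x ∈ B, ∀ z ∈ B, x < y → ¬ y < z) :
    IsNoncrossing (insert B P) ↔ IsNoncrossing P := by
  refine ⟨fun h C hC D hD => h C (mem_insert_of_mem hC) D (mem_insert_of_mem hD), fun h C hC D hD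
    i hi j hj k hk l hl hij hjk hkl => ?_⟩
  rcases mem_insert.1 hC with rfl | hCP <;> rcases mem_insert.1 hD with rfl | hDP
  · rfl
  · exact absurd hjk (hB D hDP j hj i hi k hk hij)
  · exact absurd hkl (hB C hCP k hk j hj l hl hjk)
  · exact h C hCP D hDP i hi j hj k hk l hl hij hjk hkl

lemma isIntervalFamily_insert_iff (hB : ∀ C ∈ P, ∀ y ∈ C, ∀ x ∈ B, y < x) :
    IsIntervalFamily (insert B P) ↔ IsIntervalFamily P := by
  refine ⟨fun h C hC D hD => h C (mem_insert_of_mem hC) D (mem_insert_of_mem hD), fun h C hC D hD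
    x hx y hy z hz hxy hyz => ?_⟩
  rcases mem_insert.1 hC with rfl | hCP <;> rcases mem_insert.1 hD with rfl | hDP
  · rfl
  · exact absurd hxy (hB D hDP y hy x hx).not_ge
  · exact absurd hyz (hB C hCP z hz y hy).not_ge
  · exact h C hCP D hDP x hx y hy z hz hxy hyz

lemma eq_of_filter_le_mem_parts {π : Finpartition S} {b c : α} (hb : b ∈ U) (hc : c ∈ U)
    (hbπ : {x ∈ U | b ≤ x} ∈ π.parts) (hcπ : {x ∈ U | c ≤ x} ∈ π.parts) : b = c := by
  have hmax : max b c ∈ U := max_rec' (· ∈ U) hb hc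
  have h := π.eq_of_mem_parts hbπ hcπ (a := max b c) (by simp [hmax]) (by simp [hmax])
  exact le_antisymm (mem_filter.1 (h ▸ mem_filter.2 ⟨hc, le_rfl⟩ : c ∈ {x ∈ U | b ≤ x})).2
    (mem_filter.1 (h ▸ mem_filter.2 ⟨hb, le_rfl⟩ : b ∈ {x ∈ U | c ≤ x})).2

lemma IsIntervalFamily.exists_filter_le_mem {π : Finpartition S} (hπ : IsIntervalFamily π.parts)
    (hS : S.Nonempty) : ∃ b ∈ S, {x ∈ S | b ≤ x} ∈ π.parts := by
  obtain ⟨B, hB, hmax⟩ := π.exists_mem (S.max'_mem hS)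
  have hBne := π.nonempty_of_mem_parts hB
  refine ⟨B.min' hBne, π.subset hB (B.min'_mem hBne), ?_⟩
  convert hB
  ext x
  refine ⟨fun hx => ?_, fun hx => mem_filter.2 ⟨π.subset hB hx, B.min'_le x hx⟩⟩
  obtain ⟨hxS, hle⟩ := mem_filter.1 hx
  obtain ⟨C, hC, hxC⟩ := π.exists_mem hxS
  exact hπ B hB C hC _ (B.min'_mem hBne) x hxC _ hmax hle (S.le_max' x hxS) ▸ hxC

theorem partitionSum_isIntervalFamily_eq_sum_last_block [CommSemiring R] (hS : S.Nonempty) :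
    partitionSum φ S IsIntervalFamily =
      ∑ b ∈ S, φ {x ∈ S | b ≤ x} * partitionSum φ {x ∈ S | x < b} IsIntervalFamily := by
  rw [partitionSum_eq_sum_block (T := S) (blk := fun b => {x ∈ S | b ≤ x})
    (fun b hb => ⟨b, by simp [hb]⟩) (fun b _ => filter_subset _ _)]
  · refine sum_congr rfl fun b _ => ?_
    have hsdiff : S \ {x ∈ S | b ≤ x} = {x ∈ S | x < b} := by
      rw [← filter_not]
      simp only [not_le]
    rw [hsdiff]
    refine congrArg _ (partitionSum_congr fun ρ => isIntervalFamily_insert_iff ?_)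
    exact fun C hC y hy x hx =>
      (mem_filter.1 (ρ.subset hC hy)).2.trans_le (mem_filter.1 hx).2
  · intro π hπ
    obtain ⟨b, hb, hbπ⟩ := hπ.exists_filter_le_mem hS
    exact ⟨b, ⟨hb, hbπ⟩, fun c hc => eq_of_filter_le_mem_parts hc.1 hb hc.2 hbπ⟩

lemma partitionSum_isIntervalFamily_eq_add [CommSemiring R] (hs : s ∈ S) (hmin : ∀ x ∈ S, s ≤ x) :
    partitionSum φ S IsIntervalFamily = φ S + ∑ b ∈ S with s < b,
      φ {x ∈ S | b ≤ x} * partitionSum φ {x ∈ S | x < b} IsIntervalFamily := by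
  have hbot : {x ∈ S | x < s} = ∅ := filter_false_of_mem fun x hx => (hmin x hx).not_gt
  have herase : S.erase s = {b ∈ S | s < b} := by
    ext b
    rw [mem_erase, mem_filter, and_comm]
    exact and_congr_right fun hb => ⟨(hmin b hb).lt_of_ne', ne_of_gt⟩
  rw [partitionSum_isIntervalFamily_eq_sum_last_block ⟨s, hs⟩, ← add_sum_erase _ _ hs, herase,
    hbot, filter_true_of_mem hmin, partitionSum_empty (by simp [IsIntervalFamily]), mul_one]

lemma norm_le_catalanMajorant_mul_of_eq_add_sum [NormedCommRing R] (hγ : 0 ≤ γ) (hs : s ∈ S)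
    (hS : S.Nontrivial) {x y : R} {F G : α → R} {c : ℝ} (hc : 0 ≤ c)
    (hsplit : y = x + ∑ b ∈ S with s < b, F b * G b)
    (hy : ‖y‖ ≤ γ * catalanMajorant γ (#S - 1) * c)
    (hF : ∀ b ∈ S, s < b → ‖F b‖ ≤ catalanMajorant γ #{x ∈ S | b ≤ x})
    (hG : ∀ b ∈ S, s < b → ‖G b‖ ≤ catalanMajorant γ #{x ∈ S | x < b} * c) :
    ‖x‖ ≤ catalanMajorant γ #S * c := by
  have hterm (b : α) (hb : b ∈ {b ∈ S | s < b}) : ‖F b * G b‖ ≤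
      catalanMajorant γ #{x ∈ S | b ≤ x} * catalanMajorant γ #{x ∈ S | x < b} * c := by
    obtain ⟨hbS, hsb⟩ := mem_filter.1 hb
    simpa only [mul_assoc] using norm_mul_le_of_le (hF b hbS hsb) (hG b hbS hsb)
  calc ‖x‖ = ‖y - ∑ b ∈ S with s < b, F b * G b‖ := by rw [hsplit, add_sub_cancel_right]
    _ ≤ γ * catalanMajorant γ (#S - 1) * c + ∑ b ∈ S with s < b,
        catalanMajorant γ #{x ∈ S | b ≤ x} * catalanMajorant γ #{x ∈ S | x < b} * c :=
        norm_sub_le_of_le hy (norm_sum_le_of_le _ hterm)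
    _ ≤ catalanMajorant γ #S * c := by
        rw [← sum_mul, ← add_mul]
        exact mul_le_mul_of_nonneg_right (mul_catalanMajorant_add_sum_cut_le hγ hs hS) hc

theorem norm_le_catalanMajorant_of_isIntervalFamily [NormedCommRing R] (hγ : 0 ≤ γ)
    (hM : ∀ T : Finset α, T.Nonempty → ‖partitionSum φ T IsIntervalFamily‖ ≤ γ ^ #T)
    (hS : S.Nonempty) : ‖φ S‖ ≤ catalanMajorant γ #S := by
  induction S using Finset.strongInduction with
  | H S ih =>
  have hs : S.min' hS ∈ S := S.min'_mem hS
  have hsplit := partitionSum_isIntervalFamily_eq_add (φ := φ) hs S.min'_le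
  rcases hS.exists_eq_singleton_or_nontrivial with ⟨a, ha⟩ | hnt
  · have hempty : {b ∈ S | S.min' hS < b} = ∅ := by grind
    rw [hempty, sum_empty, add_zero] at hsplit
    exact hsplit ▸ (hM S hS).trans (pow_le_catalanMajorant hγ hS.card_ne_zero)
  · rw [← mul_one (catalanMajorant γ #S)]
    refine norm_le_catalanMajorant_mul_of_eq_add_sum hγ hs hnt zero_le_one hsplit ?_ ?_ ?_
    · rw [mul_one]
      exact (hM S hS).trans <|
        pow_le_mul_catalanMajorant_pred hγ (one_lt_card_iff_nontrivial.2 hnt)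
    · exact fun b hb hsb => ih _ (filter_ssubset.2 ⟨_, hs, hsb.not_ge⟩) ⟨b, by simp [hb]⟩
    · intro b _ hsb
      have hlower : {x ∈ S | x < b}.Nonempty := ⟨_, mem_filter.2 ⟨hs, hsb⟩⟩
      rw [mul_one]
      exact (hM _ hlower).trans (pow_le_catalanMajorant hγ hlower.card_ne_zero)

/-- The blocks contained in `U` all contain `s`: this is the condition on partitions that defines
`anchoredSum`. -/
def IsAnchored (s : α) (U : Finset α) (P : Finset (Finset α)) : Prop :=
  ∀ B ∈ P, B ⊆ U → s ∈ B

/-- The sum over the noncrossing partitions of `U ∪ V` in which every block contained in `U`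
contains `s`. For `s ∈ U` it interpolates between the full sum over noncrossing partitions, at
`U = {s}`, and `φ U`, at `V = ∅`. -/
noncomputable def anchoredSum [CommSemiring R] (φ : Finset α → R) (s : α) (U V : Finset α) : R :=
  partitionSum φ (U ∪ V) fun P => IsNoncrossing P ∧ IsAnchored s U P

lemma anchoredSum_singleton [CommSemiring R] :
    anchoredSum φ s {s} V = partitionSum φ ({s} ∪ V) IsNoncrossing :=
  partitionSum_congr fun π => and_iff_left fun B hB hBs => by
    rw [(π.nonempty_of_mem_parts hB).subset_singleton_iff.1 hBs]
    exact mem_singleton_self s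

lemma anchoredSum_empty [CommSemiring R] (hs : s ∈ U) : anchoredSum φ s U ∅ = φ U := by
  rw [anchoredSum, union_empty]
  refine partitionSum_eq_of_forall_mem ⟨s, hs⟩ ?_ ?_
  · simp [IsNoncrossing, IsAnchored, hs]
  · intro π hπ
    have hpart : π.part s = U := by
      refine (π.part_subset s).antisymm fun x hx => ?_
      have hsx := hπ.2 _ (π.part_mem.2 hx) (π.part_subset x)
      rw [π.part_eq_of_mem (π.part_mem.2 hx) hsx]
      exact π.mem_part_self.2 hx
    have hmem := π.part_mem.2 hs
    rwa [hpart] at hmem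

/-- A block inside `U` that avoids the minimum `s` of `U` can leave no gap before the maximum `t` of
`U`: the block of a point in a gap would reach down to `s` or up to `t` or `V`, hence cross it. -/
lemma eq_filter_le_of_isAnchored_erase {π : Finpartition (U ∪ V)} (hnc : IsNoncrossing π.parts)
    (hanch : IsAnchored s (U.erase t) π.parts) (hs : ∀ x ∈ U, s ≤ x) (ht : ∀ x ∈ U, x ≤ t)
    (hUV : ∀ x ∈ U, ∀ y ∈ V, x < y) (hB : B ∈ π.parts) (hBU : B ⊆ U) (htB : t ∈ B) (hsB : s ∉ B)
    (hne : B.Nonempty) : B = {x ∈ U | B.min' hne ≤ x} := by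
  refine subset_antisymm (fun x hx => mem_filter.2 ⟨hBU hx, B.min'_le x hx⟩) fun x hx => ?_
  obtain ⟨hxU, hbx⟩ := mem_filter.1 hx
  have hbB := B.min'_mem hne
  obtain ⟨C, hC, hxC⟩ := π.exists_mem (mem_union_left V hxU)
  by_contra hxB
  have hCB : C ≠ B := by rintro rfl; exact hxB hxC
  have hbx : B.min' hne < x := hbx.lt_of_ne fun h => hxB (h ▸ hbB)
  have hxt : x < t := (ht x hxU).lt_of_ne fun h => hxB (h ▸ htB)
  have htC : t ∉ C := fun h => hCB (π.eq_of_mem_parts hC hB h htB)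
  by_cases hsC : s ∈ C
  · have hsb : s < B.min' hne := (hs _ (hBU hbB)).lt_of_ne fun h => hsB (h ▸ hbB)
    exact hCB (hnc C hC B hB s hsC _ hbB x hxC t htB hsb hbx hxt)
  · obtain ⟨y, hyC, hy⟩ := not_subset.1 fun hCU => hsC (hanch C hC hCU)
    have hyV : y ∈ V := (mem_union.1 (π.subset hC hyC)).resolve_left fun hyU =>
      hy (mem_erase.2 ⟨fun h => htC (h ▸ hyC), hyU⟩)
    exact hCB (hnc B hB C hC _ hbB x hxC t htB y hyC hbx hxt (hUV t (hBU htB) y hyV)).symm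

lemma exists_filter_le_mem_of_isAnchored_erase {π : Finpartition (U ∪ V)}
    (hnc : IsNoncrossing π.parts) (hanch : IsAnchored s (U.erase t) π.parts)
    (hnot : ¬ IsAnchored s U π.parts) (hs : ∀ x ∈ U, s ≤ x) (ht : ∀ x ∈ U, x ≤ t)
    (hUV : ∀ x ∈ U, ∀ y ∈ V, x < y) : ∃ b ∈ U, s < b ∧ {x ∈ U | b ≤ x} ∈ π.parts := by
  obtain ⟨B, hB, hBU, hsB⟩ : ∃ B ∈ π.parts, B ⊆ U ∧ s ∉ B := by
    simpa [IsAnchored] using hnot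
  have htB : t ∈ B := by
    by_contra htB
    exact hsB (hanch B hB (subset_erase.2 ⟨hBU, htB⟩))
  have hne := π.nonempty_of_mem_parts hB
  have hbB := B.min'_mem hne
  refine ⟨B.min' hne, hBU hbB, (hs _ (hBU hbB)).lt_of_ne fun h => hsB (h ▸ hbB), ?_⟩
  exact eq_filter_le_of_isAnchored_erase hnc hanch hs ht hUV hB hBU htB hsB hne ▸ hB

lemma isNoncrossing_and_isAnchored_insert_filter_le_iff {b : α} (hbU : b ∈ U) (hsb : s < b)
    (htU : t ∈ U) (ht : ∀ x ∈ U, x ≤ t) (hUV : ∀ x ∈ U, ∀ y ∈ V, x < y)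
    (ρ : Finpartition ({x ∈ U | x < b} ∪ V)) :
    (IsNoncrossing (insert {x ∈ U | b ≤ x} ρ.parts) ∧
        IsAnchored s (U.erase t) (insert {x ∈ U | b ≤ x} ρ.parts)) ∧
      ¬ IsAnchored s U (insert {x ∈ U | b ≤ x} ρ.parts) ↔
    IsNoncrossing ρ.parts ∧ IsAnchored s {x ∈ U | x < b} ρ.parts := by
  have hconvex : ∀ C ∈ ρ.parts, ∀ y ∈ C, ∀ x ∈ ({x ∈ U | b ≤ x} : Finset α),
      ∀ z ∈ ({x ∈ U | b ≤ x} : Finset α), x < y → ¬ y < z := by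
    intro C hC y hy x hx z hz hxy hyz
    rcases mem_union.1 (ρ.subset hC hy) with hyU | hyV
    · exact ((mem_filter.1 hx).2.trans_lt hxy).not_gt (mem_filter.1 hyU).2
    · exact hyz.not_gt (hUV z (mem_filter.1 hz).1 y hyV)
  have hnot : ¬ IsAnchored s U (insert {x ∈ U | b ≤ x} ρ.parts) := fun h =>
    (mem_filter.1 (h _ (mem_insert_self _ _) (filter_subset _ _))).2.not_gt hsb
  rw [and_iff_left hnot, isNoncrossing_insert_iff hconvex]
  refine and_congr_right fun _ => ⟨fun h C hC hCU => ?_, fun h C hC hCU => ?_⟩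
  · refine h C (mem_insert_of_mem hC) fun x hx => mem_erase.2 ?_
    obtain ⟨hxU, hxb⟩ := mem_filter.1 (hCU hx)
    exact ⟨(hxb.trans_le (ht b hbU)).ne, hxU⟩
  · rcases mem_insert.1 hC with rfl | hCρ
    · exact absurd (hCU (mem_filter.2 ⟨htU, ht b hbU⟩)) (notMem_erase t U)
    · refine h C hCρ fun x hx => ?_
      have hxU : x ∈ U := mem_of_mem_erase (hCU hx)
      exact (mem_union.1 (ρ.subset hCρ hx)).resolve_right fun hxV => (hUV x hxU x hxV).false

/-- Moving the maximum `t` of `U` over to `V` allows in addition exactly those partitions whose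
block of `t` is an upper part of `U` avoiding `s`. -/
theorem anchoredSum_erase_insert [CommSemiring R] (htU : t ∈ U)
    (hs : ∀ x ∈ U, s ≤ x) (ht : ∀ x ∈ U, x ≤ t) (hUV : ∀ x ∈ U, ∀ y ∈ V, x < y) :
    anchoredSum φ s (U.erase t) (insert t V) = anchoredSum φ s U V +
      ∑ b ∈ U with s < b, φ {x ∈ U | b ≤ x} * anchoredSum φ s {x ∈ U | x < b} V := by
  have hunion : U.erase t ∪ insert t V = U ∪ V := by
    rw [union_insert, ← insert_union, insert_erase htU]
  have hsdiff (b : α) : (U ∪ V) \ {x ∈ U | b ≤ x} = {x ∈ U | x < b} ∪ V := by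
    have hdisj : Disjoint V {x ∈ U | b ≤ x} := disjoint_left.2 fun x hxV hx =>
      (hUV x (mem_filter.1 hx).1 x hxV).false
    rw [union_sdiff_distrib, ← filter_not, hdisj.sdiff_eq_left]
    simp only [not_le]
  rw [anchoredSum, hunion, ← partitionSum_and_add_and_not (Q := IsAnchored s U)]
  congr 1
  · refine partitionSum_congr fun π => ?_
    rw [and_assoc]
    refine and_congr_right fun _ => and_iff_right_of_imp fun h B hB hBU => ?_
    exact h B hB (hBU.trans (erase_subset t U))
  rw [partitionSum_eq_sum_block (T := {b ∈ U | s < b}) (blk := fun b => {x ∈ U | b ≤ x})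
    (fun b hb => ⟨b, mem_filter.2 ⟨(mem_filter.1 hb).1, le_rfl⟩⟩)
    (fun b _ => (filter_subset _ _).trans subset_union_left)]
  · refine sum_congr rfl fun b hb => congrArg _ ?_
    obtain ⟨hbU, hsb⟩ := mem_filter.1 hb
    rw [hsdiff, anchoredSum]
    exact partitionSum_congr
      (isNoncrossing_and_isAnchored_insert_filter_le_iff hbU hsb htU ht hUV)
  · rintro π ⟨⟨hnc, hanch⟩, hnot⟩
    obtain ⟨b, hbU, hsb, hb⟩ :=
      exists_filter_le_mem_of_isAnchored_erase hnc hanch hnot hs ht hUV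
    exact ⟨b, ⟨mem_filter.2 ⟨hbU, hsb⟩, hb⟩, fun c hc =>
      eq_of_filter_le_mem_parts (mem_filter.1 hc.1).1 hbU hc.2 hb⟩

theorem norm_anchoredSum_le [NormedCommRing R] (hγ : 0 ≤ γ)
    (hM : ∀ T : Finset α, T.Nonempty → ‖partitionSum φ T IsNoncrossing‖ ≤ γ ^ #T)
    (hsU : s ∈ U) (hs : ∀ x ∈ U, s ≤ x) (hUV : ∀ x ∈ U, ∀ y ∈ V, x < y) :
    ‖anchoredSum φ s U V‖ ≤ catalanMajorant γ #U * γ ^ #V := by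
  induction U using Finset.strongInduction generalizing s V with
  | H U ih =>
  obtain ⟨t, htU, ht⟩ : ∃ t ∈ U, ∀ x ∈ U, x ≤ t := ⟨_, U.max'_mem ⟨s, hsU⟩, U.le_max'⟩
  rcases (hs t htU).eq_or_lt with rfl | hst
  · obtain rfl : U = {s} := eq_singleton_iff_unique_mem.2
      ⟨hsU, fun x hx => (ht x hx).antisymm (hs x hx)⟩
    have hsV : s ∉ V := fun h => (hUV s hsU s h).false
    rw [anchoredSum_singleton]
    calc ‖partitionSum φ ({s} ∪ V) IsNoncrossing‖ ≤ γ ^ #({s} ∪ V) := hM _ (by simp)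
      _ = γ ^ #{s} * γ ^ #V := by
        rw [card_union_of_disjoint (disjoint_singleton_left.2 hsV), pow_add]
      _ ≤ catalanMajorant γ #{s} * γ ^ #V := by
        gcongr
        exact pow_le_catalanMajorant hγ (by simp)
  have htV : t ∉ V := fun h => (hUV t htU t h).false
  refine norm_le_catalanMajorant_mul_of_eq_add_sum hγ hsU ⟨s, hsU, t, htU, hst.ne⟩ (by positivity)
    (anchoredSum_erase_insert htU hs ht hUV) ?_ (fun b hbU hsb => ?_) (fun b hbU hsb => ?_)
  · have hlt : ∀ x ∈ U.erase t, ∀ y ∈ insert t V, x < y := fun x hx => (forall_mem_insert _ _ _).2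
      ⟨(ht x (mem_of_mem_erase hx)).lt_of_ne (ne_of_mem_erase hx), hUV x (mem_of_mem_erase hx)⟩
    refine (ih _ (erase_ssubset htU) (mem_erase.2 ⟨hst.ne, hsU⟩)
      (fun x hx => hs x (mem_of_mem_erase hx)) hlt).trans_eq ?_
    rw [card_erase_of_mem htU, card_insert_of_notMem htV]
    ring
  · have hb : b ∈ {x ∈ U | b ≤ x} := mem_filter.2 ⟨hbU, le_rfl⟩
    have hupper := ih {x ∈ U | b ≤ x} (filter_ssubset.2 ⟨s, hsU, hsb.not_ge⟩) (V := ∅) hb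
      (fun x hx => (mem_filter.1 hx).2) (by simp)
    rwa [anchoredSum_empty hb, card_empty, pow_zero, mul_one] at hupper
  · exact ih {x ∈ U | x < b} (filter_ssubset.2 ⟨b, hbU, lt_irrefl b⟩) (mem_filter.2 ⟨hsU, hsb⟩)
      (fun x hx => hs x (mem_filter.1 hx).1) (fun x hx => hUV x (mem_filter.1 hx).1)

theorem norm_le_catalanMajorant_of_isNoncrossing [NormedCommRing R] (hγ : 0 ≤ γ)
    (hM : ∀ T : Finset α, T.Nonempty → ‖partitionSum φ T IsNoncrossing‖ ≤ γ ^ #T)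
    (hS : S.Nonempty) : ‖φ S‖ ≤ catalanMajorant γ #S := by
  have hs := S.min'_mem hS
  simpa only [anchoredSum_empty hs, card_empty, pow_zero, mul_one] using
    norm_anchoredSum_le (V := ∅) hγ hM hs S.min'_le (by simp)

end Inversion

section Transport

variable {α β R : Type*} {φ : Finset α → R} {T : Finset β} {Q : Finset (Finset α) → Prop}

/-- The image of a partition of `T` under an embedding, as a partition of the image of `T`. -/
noncomputable def mapPartition (e : β ↪ α) (π : Finpartition T) : Finpartition (T.map e) where
  parts := π.parts.map (mapEmbedding e).toEmbedding
  supIndep := by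
    rw [supIndep_iff_pairwiseDisjoint, coe_map]
    rintro _ ⟨B, hB, rfl⟩ _ ⟨C, hC, rfl⟩ hBC
    exact (disjoint_map e).2 (π.disjoint hB hC fun h => hBC (congrArg _ h))
  sup_parts := by
    rw [sup_map]
    exact π.sup_parts_apply (f := Finset.map e) (fun _ _ => map_union _ _) (map_empty e)
  bot_notMem := by
    simp

lemma mapPartition_parts (e : β ↪ α) (π : Finpartition T) :
    (mapPartition e π).parts = π.parts.map (mapEmbedding e).toEmbedding :=
  rfl

lemma mapPartition_injective (e : β ↪ α) :
    Function.Injective (mapPartition e : Finpartition T → Finpartition (T.map e)) := fun _ _ h =>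
  Finpartition.ext <| map_injective _ <| congrArg Finpartition.parts h

lemma mapPartition_surjective (e : β ↪ α) :
    Function.Surjective (mapPartition e : Finpartition T → Finpartition (T.map e)) := by
  intro ρ
  obtain ⟨P, -, hP⟩ : ∃ P ⊆ T.powerset, ρ.parts = P.map (mapEmbedding e).toEmbedding := by
    refine subset_map_iff.1 fun C hC => ?_
    obtain ⟨B, hB, rfl⟩ := subset_map_iff.1 (ρ.subset hC)
    exact mem_map_of_mem _ (mem_powerset.2 hB)
  have hmem {B : Finset β} (hB : B ∈ P) : B.map e ∈ ρ.parts := hP ▸ mem_map_of_mem _ hB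
  refine ⟨⟨P, ?_, ?_, fun h => ρ.bot_notMem (hmem h)⟩, Finpartition.ext hP.symm⟩
  · refine supIndep_iff_pairwiseDisjoint.2 fun B hB C hC hBC => (disjoint_map e).1 ?_
    exact ρ.disjoint (hmem hB) (hmem hC) ((map_injective e).ne hBC)
  · refine map_injective e ?_
    rw [← ρ.sup_parts, hP, sup_map]
    exact apply_sup_eq_sup_comp (Finset.map e) (fun _ _ => map_union _ _) (map_empty e)

theorem partitionSum_map [CommSemiring R] (e : β ↪ α) (T : Finset β) :
    partitionSum φ (T.map e) Q =
      partitionSum (fun B => φ (B.map e)) T (fun P => Q (P.map (mapEmbedding e).toEmbedding)) := by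
  symm
  refine sum_bijective (mapPartition e) ⟨mapPartition_injective e, mapPartition_surjective e⟩ ?_ ?_
  · intro π
    simp only [mem_filter, mem_univ, true_and, mapPartition_parts]
  · intro π _
    rw [mapPartition_parts, prod_map]
    rfl

variable [LinearOrder α] [LinearOrder β]

lemma isNoncrossing_map_iff (e : β ↪o α) {P : Finset (Finset β)} :
    IsNoncrossing (P.map (mapEmbedding e.toEmbedding).toEmbedding) ↔ IsNoncrossing P := by
  simp [IsNoncrossing]

lemma isIntervalFamily_map_iff (e : β ↪o α) {P : Finset (Finset β)} :
    IsIntervalFamily (P.map (mapEmbedding e.toEmbedding).toEmbedding) ↔ IsIntervalFamily P := by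
  simp [IsIntervalFamily]

end Transport

section Words

variable {k m n : ℕ} {f M : NCSeries k} {γ : ℝ}

lemma partCoeff_eq (f : NCSeries k) (w : Fin (m + 1) → Fin k) {B : Finset (Fin (m + 1))}
    (hB : #B = n + 1) : partCoeff f w B = f n (w ∘ B.orderEmbOfFin hB) := by
  obtain rfl : n = #B - 1 := by omega
  rw [partCoeff, dif_pos (card_pos.1 (hB ▸ Nat.succ_pos _))]
  rfl

lemma partCoeff_univ (f : NCSeries k) (w : Fin (n + 1) → Fin k) : partCoeff f w univ = f n w := by
  rw [partCoeff_eq f w (card_fin (n + 1)), ← orderEmbOfFin_unique' _ (f := RelEmbedding.refl _)]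
  · rfl
  · simp

lemma partCoeff_map (f : NCSeries k) (w : Fin (m + 1) → Fin k) (e : Fin (n + 1) ↪o Fin (m + 1))
    (B : Finset (Fin (n + 1))) : partCoeff f w (B.map e.toEmbedding) = partCoeff f (w ∘ e) B := by
  rcases B.eq_empty_or_nonempty with rfl | hB
  · simp [partCoeff]
  obtain ⟨p, hp⟩ := Nat.exists_eq_add_one_of_ne_zero hB.card_ne_zero
  rw [partCoeff_eq f w ((card_map _).trans hp), partCoeff_eq f _ hp, Function.comp_assoc]
  congr 2
  exact (orderEmbOfFin_unique _ (fun x => mem_map_of_mem e.toEmbedding (B.orderEmbOfFin_mem hp x))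
    (e.strictMono.comp (B.orderEmbOfFin hp).strictMono)).symm

lemma partitionSum_partCoeff {Q : ∀ m, Finset (Finset (Fin m)) → Prop}
    (hQ : ∀ {m n} (e : Fin m ↪o Fin n) {P},
      Q n (P.map (mapEmbedding e.toEmbedding).toEmbedding) ↔ Q m P)
    (hM : ∀ n w, M n w = partitionSum (partCoeff f w) univ (Q (n + 1)))
    (w : Fin (m + 1) → Fin k) {S : Finset (Fin (m + 1))} (hS : S.Nonempty) :
    partitionSum (partCoeff f w) S (Q (m + 1)) = partCoeff M w S := by
  obtain ⟨p, hp⟩ := Nat.exists_eq_add_one_of_ne_zero hS.card_ne_zero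
  rw [partCoeff_eq M w hp, hM]
  conv_lhs => rw [← S.map_orderEmbOfFin_univ hp, partitionSum_map]
  simp only [partCoeff_map, hQ]

lemma norm_partCoeff_le (hf : ∀ n w, ‖f n w‖ ≤ γ ^ (n + 1)) (w : Fin (m + 1) → Fin k)
    {B : Finset (Fin (m + 1))} (hB : B.Nonempty) : ‖partCoeff f w B‖ ≤ γ ^ #B := by
  obtain ⟨n, hn⟩ := Nat.exists_eq_add_one_of_ne_zero hB.card_ne_zero
  rw [partCoeff_eq f w hn, hn]
  exact hf n _

/-- The coefficients of `f` grow at most exponentially in the length of the word. This is the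
condition that statements (1), (2) and (3) impose on `M_μ`, `R_μ` and `η_μ`. -/
def HasGeometricBound (f : NCSeries k) : Prop :=
  ∃ γ : ℝ, 0 < γ ∧ ∀ (n : ℕ) (w : Fin (n + 1) → Fin k), ‖f n w‖ ≤ γ ^ (n + 1)

lemma HasGeometricBound.of_eq_partitionSum {Q : ∀ m, Finset (Finset (Fin m)) → Prop}
    (hf : HasGeometricBound f) (hQ : ∀ m P, Q m P → IsNoncrossing P)
    (hM : ∀ n w, M n w = partitionSum (partCoeff f w) univ (Q (n + 1))) :
    HasGeometricBound M := by
  obtain ⟨γ, hγ, hf⟩ := hf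
  refine ⟨4 * γ, by positivity, fun n w => ?_⟩
  have hbound := norm_partitionSum_le (S := univ) hγ.le (fun _ => hQ (n + 1) _)
    fun B _ hB => norm_partCoeff_le hf w hB
  rwa [← hM, card_fin] at hbound

lemma norm_partitionSum_partCoeff_le {Q : ∀ m, Finset (Finset (Fin m)) → Prop}
    (hQ : ∀ {m n} (e : Fin m ↪o Fin n) {P},
      Q n (P.map (mapEmbedding e.toEmbedding).toEmbedding) ↔ Q m P)
    (hM : ∀ n w, M n w = partitionSum (partCoeff f w) univ (Q (n + 1)))
    (hγ : ∀ n w, ‖M n w‖ ≤ γ ^ (n + 1)) (w : Fin (m + 1) → Fin k) {S : Finset (Fin (m + 1))}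
    (hS : S.Nonempty) : ‖partitionSum (partCoeff f w) S (Q (m + 1))‖ ≤ γ ^ #S :=
  partitionSum_partCoeff hQ hM w hS ▸ norm_partCoeff_le hγ w hS

lemma HasGeometricBound.of_norm_partCoeff_le_catalanMajorant (hγ : 0 < γ)
    (hf : ∀ n (w : Fin (n + 1) → Fin k), ‖partCoeff f w univ‖ ≤ catalanMajorant γ (n + 1)) :
    HasGeometricBound f :=
  ⟨8 * γ, by positivity, fun n w => partCoeff_univ f w ▸
    (hf n w).trans (catalanMajorant_le_pow hγ.le _)⟩

lemma isNC_iff_isNoncrossing {π : FP m} : IsNC π ↔ IsNoncrossing π.parts := by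
  constructor
  · intro h B hB C hC i hi j hj k hk l hl hij hjk hkl
    obtain ⟨D, hD, hiD, hjD⟩ := h i j k l hij hjk hkl ⟨B, hB, hi, hk⟩ ⟨C, hC, hj, hl⟩
    rw [π.eq_of_mem_parts hB hD hi hiD, π.eq_of_mem_parts hC hD hj hjD]
  · rintro h i j k l hij hjk hkl ⟨B, hB, hi, hk⟩ ⟨C, hC, hj, hl⟩
    exact ⟨B, hB, hi, h B hB C hC i hi j hj k hk l hl hij hjk hkl ▸ hj⟩

lemma isIntervalPartition_iff_isIntervalFamily {π : FP m} :
    IsIntervalPartition π ↔ IsIntervalFamily π.parts := by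
  constructor
  · intro h B hB C hC x hx y hy z hz hxy hyz
    exact π.eq_of_mem_parts hB hC (h B hB x hx z hz y hxy hyz) hy
  · intro h B hB x hx z hz y hxy hyz
    obtain ⟨C, hC, hy⟩ := π.exists_mem (mem_univ y)
    exact h B hB C hC x hx y hy z hz hxy hyz ▸ hy

lemma sum_ite_genCoeff {P : FP (n + 1) → Prop} {Q : Finset (Finset (Fin (n + 1))) → Prop}
    (h : ∀ π, P π ↔ Q π.parts) (w : Fin (n + 1) → Fin k) :
    ∑ π : FP (n + 1), (if P π then genCoeff f w π else 0) =
      partitionSum (partCoeff f w) univ Q := by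
  -- `FP` uses the decidable equality of `Fin`, but `partitionSum` the classical one.
  have hdec : (fun a b => Classical.propDecidable (a = b)) = instDecidableEqFin (n + 1) :=
    Subsingleton.elim _ _
  simp only [h, ← sum_filter]
  unfold partitionSum
  rw [hdec]
  exact sum_congr (by congr!) fun _ _ => rfl

variable {μ : Dist k}

lemma IsRTransform.momentSeries_eq_partitionSum (hf : IsRTransform μ f) (n : ℕ)
    (w : Fin (n + 1) → Fin k) :
    momentSeries μ n w = partitionSum (partCoeff f w) univ IsNoncrossing :=
  (hf n w).trans (sum_ite_genCoeff (fun _ => isNC_iff_isNoncrossing) w)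

lemma IsEtaSeries.momentSeries_eq_partitionSum (hf : IsEtaSeries μ f) (n : ℕ)
    (w : Fin (n + 1) → Fin k) :
    momentSeries μ n w = partitionSum (partCoeff f w) univ IsIntervalFamily :=
  (hf n w).trans (sum_ite_genCoeff (fun _ => isIntervalPartition_iff_isIntervalFamily) w)

theorem IsRTransform.hasGeometricBound_iff (hf : IsRTransform μ f) :
    HasGeometricBound (momentSeries μ) ↔ HasGeometricBound f := by
  constructor
  · rintro ⟨γ, hγ, hM⟩
    refine .of_norm_partCoeff_le_catalanMajorant hγ fun n w => ?_
    have hbound (T : Finset (Fin (n + 1))) := norm_partitionSum_partCoeff_le (S := T)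
      (Q := fun _ => IsNoncrossing) isNoncrossing_map_iff hf.momentSeries_eq_partitionSum hM w
    simpa only [card_fin] using
      norm_le_catalanMajorant_of_isNoncrossing hγ.le hbound univ_nonempty
  · exact fun h => h.of_eq_partitionSum (Q := fun _ => IsNoncrossing) (fun _ _ => id)
      hf.momentSeries_eq_partitionSum

theorem IsEtaSeries.hasGeometricBound_iff (hf : IsEtaSeries μ f) :
    HasGeometricBound (momentSeries μ) ↔ HasGeometricBound f := by
  constructor
  · rintro ⟨γ, hγ, hM⟩
    refine .of_norm_partCoeff_le_catalanMajorant hγ fun n w => ?_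
    have hbound (T : Finset (Fin (n + 1))) := norm_partitionSum_partCoeff_le (S := T)
      (Q := fun _ => IsIntervalFamily) isIntervalFamily_map_iff hf.momentSeries_eq_partitionSum hM w
    simpa only [card_fin] using
      norm_le_catalanMajorant_of_isIntervalFamily hγ.le hbound univ_nonempty
  · exact fun h => h.of_eq_partitionSum (Q := fun _ => IsIntervalFamily)
      (fun _ _ => IsIntervalFamily.isNoncrossing) hf.momentSeries_eq_partitionSum

end Words

/-- Lemma 5.6: for `μ ∈ D_alg(k)`, the exponential bounds
`|Cf_w(M_μ)| ≤ γ^n`, `|Cf_w(R_μ)| ≤ γ^n`, `|Cf_w(η_μ)| ≤ γ^n` (each for some `γ > 0`)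
are equivalent. -/
theorem statement11 (k : ℕ) (hk : 0 < k) (μ : Dist k) (hμ : IsDalg μ)
    (f g : NCSeries k) (hf : IsRTransform μ f) (hg : IsEtaSeries μ g) :
    ((∃ γ : ℝ, 0 < γ ∧ ∀ (n : ℕ) (w : Fin (n+1) → Fin k),
        ‖momentSeries μ n w‖ ≤ γ ^ (n+1)) ↔
      (∃ γ : ℝ, 0 < γ ∧ ∀ (n : ℕ) (w : Fin (n+1) → Fin k), ‖f n w‖ ≤ γ ^ (n+1))) ∧
    ((∃ γ : ℝ, 0 < γ ∧ ∀ (n : ℕ) (w : Fin (n+1) → Fin k),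
        ‖momentSeries μ n w‖ ≤ γ ^ (n+1)) ↔
      (∃ γ : ℝ, 0 < γ ∧ ∀ (n : ℕ) (w : Fin (n+1) → Fin k), ‖g n w‖ ≤ γ ^ (n+1))) := by
  exact ⟨hf.hasGeometricBound_iff, hg.hasGeometricBound_iff⟩

end BBP
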